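/- Fix d ∈ ℝ and points p_i = (x_i, y_i, d) ∈ ℝ³ for i = 1, …, N (a scan of a plane wall z = d) satisfying the symmetry conditions Σᵢ x_i = 0, Σᵢ y_i = 0, Σᵢ x_i y_i = 0, and the nondegeneracy conditions N ≥ 1, Σᵢ x_i² > 0, Σᵢ y_i² > 0. For each i let B_i be the 3 × 6 real matrix B_i = [S(p_i), −I], where S(p) is the 3 × 3 skew-symmetric matrix with S(p)q = p × q and I is the 3 × 3 identity, and let A := Σᵢ Bᵢᵀ Bᵢ be the 6 × 6 point-to-point ICP Hessian. Then A is invertible (full rank, no zero eigenvalues). -/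

import Mathlib

/-! The quadratic form of `A` at `v = (a, b)` is `∑ i, ‖p i × a - b‖²`, so a kernel vector satisfies
`p i × a = b` for every `i`. The symmetry conditions say that the functions `1`, `x`, `y` are
pairwise orthogonal on the index set; pairing the first coordinate of this identity with `y`, and
the third with `x` and `y`, gives `a 2 = a 1 = a 0 = 0`. Then `b = 0`, since there is at least one
point. -/

open Matrix

/-- A sum of Gram matrices `Bᵢᵀ Bᵢ` kills a vector only if every `Bᵢ` does. -/
lemma mulVec_eq_zero_of_sum_gram {ι m n : Type*} [Fintype ι] [Fintype m] [Fintype n]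
    (B : ι → Matrix m n ℝ) (v : n → ℝ) (h : (∑ i, (B i)ᵀ * B i) *ᵥ v = 0) (i : ι) :
    B i *ᵥ v = 0 := by
  have h1 : ∑ i, (B i *ᵥ v) ⬝ᵥ (B i *ᵥ v) = 0 := by
    have h2 := congrArg (fun w => v ⬝ᵥ w) h
    simp only [Matrix.sum_mulVec, dotProduct_sum, dotProduct_zero] at h2
    rw [← h2]
    refine Finset.sum_congr rfl fun i _ => ?_
    rw [← Matrix.mulVec_mulVec, Matrix.dotProduct_mulVec v, Matrix.vecMul_transpose]
  have h3 := (Finset.sum_eq_zero_iff_of_nonneg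
    (fun i _ => Finset.sum_nonneg fun j _ => mul_self_nonneg ((B i *ᵥ v) j))).1 h1 i
    (Finset.mem_univ i)
  exact dotProduct_self_eq_zero.1 h3

/-- The block matrix `[M, -I]` sends `(a, b)` to `M a - b`. -/
lemma append_neg_one_mulVec (M : Matrix (Fin 3) (Fin 3) ℝ) (v : Fin 6 → ℝ) :
    (Matrix.of fun r : Fin 3 => Fin.append (M r) ((-1 : Matrix (Fin 3) (Fin 3) ℝ) r)) *ᵥ v =
      M *ᵥ ![v 0, v 1, v 2] - ![v 3, v 4, v 5] := by
  have hsum : ∀ r : Fin 3,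
      ((Matrix.of fun r : Fin 3 => Fin.append (M r) ((-1 : Matrix (Fin 3) (Fin 3) ℝ) r)) *ᵥ v) r =
        (M *ᵥ ![v 0, v 1, v 2]) r + ((-1 : Matrix (Fin 3) (Fin 3) ℝ) *ᵥ ![v 3, v 4, v 5]) r := by
    intro r
    refine (Fin.sum_univ_add (a := 3) (b := 3) fun j =>
      Fin.append (M r) ((-1 : Matrix (Fin 3) (Fin 3) ℝ) r) j * v j).trans ?_
    refine congrArg₂ (· + ·) ?_ ?_
    · refine Finset.sum_congr rfl fun j _ => congrArg₂ (· * ·) (Fin.append_left _ _ j) ?_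
      fin_cases j <;> rfl
    · refine Finset.sum_congr rfl fun j _ => congrArg₂ (· * ·) (Fin.append_right _ _ j) ?_
      fin_cases j <;> rfl
  ext r
  rw [hsum, Matrix.neg_mulVec, Matrix.one_mulVec, Pi.neg_apply, Pi.sub_apply, sub_eq_add_neg]

/-- 3D wall example, point-to-point Hessian: for a symmetric, nondegenerate scan
of the plane wall `z = d` and blocks `Bᵢ = [S(pᵢ), −I]` (with `S(p)q = p × q`),
the point-to-point ICP Hessian `A = Σᵢ Bᵢᵀ Bᵢ` is invertible (full rank), even
though the scene has three unobservable directions. -/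
theorem icp_point_to_point_wall_hessian_invertible
    {N : ℕ} (d : ℝ) (x y : Fin N → ℝ)
    (hN : 1 ≤ N)
    (hx0 : ∑ i, x i = 0) (hy0 : ∑ i, y i = 0) (hxy : ∑ i, x i * y i = 0)
    (hx2 : 0 < ∑ i, (x i) ^ 2) (hy2 : 0 < ∑ i, (y i) ^ 2)
    (p : Fin N → Fin 3 → ℝ) (hp : ∀ i, p i = ![x i, y i, d])
    (S : (Fin 3 → ℝ) → Matrix (Fin 3) (Fin 3) ℝ)
    (hS : ∀ u v : Fin 3 → ℝ, S u *ᵥ v = crossProduct u v)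
    (B : Fin N → Matrix (Fin 3) (Fin 6) ℝ)
    (hB : ∀ i, B i = Matrix.of fun r : Fin 3 =>
      Fin.append (S (p i) r) ((-1 : Matrix (Fin 3) (Fin 3) ℝ) r))
    (A : Matrix (Fin 6) (Fin 6) ℝ) (hA : A = ∑ i, (B i)ᵀ * B i) :
    IsUnit A := by
  rw [← Matrix.mulVec_injective_iff_isUnit]
  refine (injective_iff_map_eq_zero A.mulVecLin).2 fun v hv => ?_
  rw [Matrix.mulVecLin_apply, hA] at hv
  have hBv : ∀ i, crossProduct (p i) ![v 0, v 1, v 2] = ![v 3, v 4, v 5] := by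
    intro i
    have h := mulVec_eq_zero_of_sum_gram B v hv i
    rwa [hB, append_neg_one_mulVec, hS, sub_eq_zero] at h
  have e0 : ∀ i, y i * v 2 - d * v 1 = v 3 := fun i => by
    simpa [hp, cross_apply] using congrFun (hBv i) 0
  have e1 : ∀ i, d * v 0 - x i * v 2 = v 4 := fun i => by
    simpa [hp, cross_apply] using congrFun (hBv i) 1
  have e2 : ∀ i, x i * v 1 - y i * v 0 = v 5 := fun i => by
    simpa [hp, cross_apply] using congrFun (hBv i) 2
  have a2 : v 2 = 0 := by
    have h : (∑ i, y i ^ 2) * v 2 = (∑ i, y i) * (d * v 1 + v 3) := by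
      rw [Finset.sum_mul, Finset.sum_mul]
      exact Finset.sum_congr rfl fun i _ => by linear_combination y i * e0 i
    rw [hy0, zero_mul] at h
    exact (mul_eq_zero.1 h).resolve_left hy2.ne'
  have a1 : v 1 = 0 := by
    have h : (∑ i, x i ^ 2) * v 1 = (∑ i, x i * y i) * v 0 + (∑ i, x i) * v 5 := by
      rw [Finset.sum_mul, Finset.sum_mul, Finset.sum_mul, ← Finset.sum_add_distrib]
      exact Finset.sum_congr rfl fun i _ => by linear_combination x i * e2 i
    rw [hx0, hxy, zero_mul, zero_mul, add_zero] at h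
    exact (mul_eq_zero.1 h).resolve_left hx2.ne'
  have a0 : v 0 = 0 := by
    have h : (∑ i, y i ^ 2) * v 0 = (∑ i, x i * y i) * v 1 - (∑ i, y i) * v 5 := by
      rw [Finset.sum_mul, Finset.sum_mul, Finset.sum_mul, ← Finset.sum_sub_distrib]
      exact Finset.sum_congr rfl fun i _ => by linear_combination (-y i) * e2 i
    rw [hy0, hxy, zero_mul, zero_mul, sub_zero] at h
    exact (mul_eq_zero.1 h).resolve_left hy2.ne'
  have f0 := e0 ⟨0, hN⟩
  have f1 := e1 ⟨0, hN⟩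
  have f2 := e2 ⟨0, hN⟩
  simp only [a0, a1, a2, mul_zero, sub_zero] at f0 f1 f2
  ext j
  fin_cases j
  exacts [a0, a1, a2, f0.symm, f1.symm, f2.symm]
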